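/- Fix a real number $\hbar>0$ and an integer $N\ge 2$. A Gelfand–Zetlin array is a family $\gamma=(\gamma_{nj})_{1\le j\le n\le N}$ of complex numbers; $e_{nj}$ denotes the array equal to $1$ in position $(n,j)$ and $0$ elsewhere. For functions $f$ of such arrays and $1\le n\le N-1$ put $$(E_{n,n+1}f)(\gamma)=-\frac1{i\hbar}\sum_{j=1}^n\frac{\prod_{r=1}^{n+1}(\gamma_{nj}-\gamma_{n+1,r}-\frac{i\hbar}2)}{\prod_{s\le n,\,s\ne j}(\gamma_{nj}-\gamma_{ns})}\,f(\gamma-i\hbar e_{nj}),$$ $$(E_{n+1,n}f)(\gamma)=\frac1{i\hbar}\sum_{j=1}^n\frac{\prod_{r=1}^{n-1}(\gamma_{nj}-\gamma_{n-1,r}+\frac{i\hbar}2)}{\prod_{s\le n,\,s\ne j}(\gamma_{nj}-\gamma_{ns})}\,f(\gamma+i\hbar e_{nj}).$$ With $(2\hbar)^z:=\exp(z\log(2\hbar))$, where $\log$ is the real logarithm, define $$\phi_n(\gamma_n,\gamma_{n+1})=\prod_{k=1}^n\prod_{m=1}^{n+1}(2\hbar)^{\frac{\gamma_{nk}-\gamma_{n+1,m}}{2i\hbar}+\frac14}\,\Gamma\Big(\frac{\gamma_{nk}-\gamma_{n+1,m}}{2i\hbar}+\frac14\Big),$$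 $$v_N(\gamma)=\exp\Big(-\frac{\pi}{2\hbar}\sum_{n=1}^{N-1}(n-1)\sum_{j=1}^n\gamma_{nj}\Big)\prod_{n=1}^{N-1}\phi_n(\gamma_n,\gamma_{n+1}).$$ Let $\gamma$ be a Gelfand–Zetlin array that is non-resonant, i.e. $(\gamma_{nj}-\gamma_{ns})/(i\hbar)\notin\mathbb Z$ for all $1\le n\le N-1$ and $1\le j<s\le n$, and such that $(\gamma_{nk}-\gamma_{n+1,m})/(i\hbar)+\frac12\notin\mathbb Z$ for all $1\le n\le N-1$, $1\le k\le n$, $1\le m\le n+1$. Then for every $1\le n\le N-1$ $$\big((E_{n,n+1}-E_{n+1,n})v_N\big)(\gamma)=0;$$ explicitly, $$\sum_{j=1}^n\frac{\prod_{r=1}^{n+1}(\gamma_{nj}-\gamma_{n+1,r}-\frac{i\hbar}2)\,v_N(\gamma-i\hbar e_{nj})+\prod_{r=1}^{n-1}(\gamma_{nj}-\gamma_{n-1,r}+\frac{i\hbar}2)\,v_N(\gamma+i\hbar e_{nj})}{\prod_{s\le n,\,s\ne j}(\gamma_{nj}-\gamma_{ns})}=0.$$ -/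

import Mathlib

noncomputable section

/-- A Gelfand–Zetlin array: complex numbers `γ n j`. Only the entries with `1 ≤ j ≤ n ≤ N` are
ever used; all other entries are irrelevant. -/
abbrev GZ := ℕ → ℕ → ℂ

/-- The array `γ + c • e_{nj}`: the single entry `γ n j` is shifted by `c`. -/
def gzShift (c : ℂ) (n j : ℕ) (γ : GZ) : GZ :=
  fun a b => if a = n ∧ b = j then γ a b + c else γ a b

/-- The Gelfand–Zetlin operator `E_{n,n+1}`. -/
def Eraise (ℏ : ℝ) (n : ℕ) (f : GZ → ℂ) : GZ → ℂ := fun γ =>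
  -(1 / (Complex.I * ℏ)) * ∑ j ∈ Finset.Icc 1 n,
    ((∏ r ∈ Finset.Icc 1 (n + 1), (γ n j - γ (n + 1) r - Complex.I * ℏ / 2)) /
      ∏ s ∈ (Finset.Icc 1 n).erase j, (γ n j - γ n s)) * f (gzShift (-(Complex.I * ℏ)) n j γ)

/-- The Gelfand–Zetlin operator `E_{n+1,n}`. -/
def Elower (ℏ : ℝ) (n : ℕ) (f : GZ → ℂ) : GZ → ℂ := fun γ =>
  (1 / (Complex.I * ℏ)) * ∑ j ∈ Finset.Icc 1 n,
    ((∏ r ∈ Finset.Icc 1 (n - 1), (γ n j - γ (n - 1) r + Complex.I * ℏ / 2)) /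
      ∏ s ∈ (Finset.Icc 1 n).erase j, (γ n j - γ n s)) * f (gzShift (Complex.I * ℏ) n j γ)

/-- Non-resonance: below the top row, no two entries of the same row differ by an integer
multiple of `iℏ`. -/
def NonResonant (ℏ : ℝ) (N : ℕ) (γ : GZ) : Prop :=
  ∀ n ∈ Finset.Icc 1 (N - 1), ∀ j s : ℕ, 1 ≤ j → j < s → s ≤ n →
    ∀ m : ℤ, (γ n j - γ n s) / (Complex.I * ℏ) ≠ (m : ℂ)

/-- The factor `φ_n(γ_n, γ_{n+1})`. For `ℏ > 0` the complex power is
`(2ℏ)^z = exp (z * log (2ℏ))` with the real logarithm. -/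
def phiS (ℏ : ℝ) (n : ℕ) (γ : GZ) : ℂ :=
  ∏ k ∈ Finset.Icc 1 n, ∏ m ∈ Finset.Icc 1 (n + 1),
    (2 * (ℏ : ℂ)) ^ ((γ n k - γ (n + 1) m) / (2 * Complex.I * ℏ) + 1 / 4) *
      Complex.Gamma ((γ n k - γ (n + 1) m) / (2 * Complex.I * ℏ) + 1 / 4)

/-- The Sutherland vector `v_N`. -/
def vSuth (ℏ : ℝ) (N : ℕ) (γ : GZ) : ℂ :=
  Complex.exp (-((Real.pi : ℂ) / (2 * (ℏ : ℂ))) *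
      ∑ n ∈ Finset.Icc 1 (N - 1), ((n : ℂ) - 1) * ∑ j ∈ Finset.Icc 1 n, γ n j) *
    ∏ n ∈ Finset.Icc 1 (N - 1), phiS ℏ n γ

end

open Complex in
/-- The function `z ↦ a ^ z * Γ z` has the functional equation `a z F(z) = F(z + 1)`. -/
theorem mul_cpow_mul_Gamma {a z : ℂ} (ha : a ≠ 0) (hz : z ≠ 0) :
    a * z * (a ^ z * Gamma z) = a ^ (z + 1) * Gamma (z + 1) := by
  rw [cpow_add _ _ ha, cpow_one, Gamma_add_one z hz]
  ring

theorem gzShift_same (c : ℂ) (n j : ℕ) (γ : GZ) : gzShift c n j γ n j = γ n j + c := by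
  simp [gzShift]

theorem gzShift_of_row_ne (c : ℂ) {n l : ℕ} (j k : ℕ) (γ : GZ) (h : l ≠ n) :
    gzShift c n j γ l k = γ l k := by
  simp [gzShift, h]

theorem gzShift_of_col_ne (c : ℂ) (n l : ℕ) {j k : ℕ} (γ : GZ) (h : k ≠ j) :
    gzShift c n j γ l k = γ l k := by
  simp [gzShift, h]

theorem phiS_gzShift_of_ne (ℏ : ℝ) (c : ℂ) {n l : ℕ} (j : ℕ) (γ : GZ) (h : l ≠ n)
    (h' : l + 1 ≠ n) : phiS ℏ l (gzShift c n j γ) = phiS ℏ l γ := by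
  simp only [phiS, gzShift_of_row_ne c _ _ γ h, gzShift_of_row_ne c _ _ γ h']

theorem phiS_zero (ℏ : ℝ) (γ : GZ) : phiS ℏ 0 γ = 1 := by
  simp [phiS]

/-- The numerator of `E_{n,n+1}` turns a downward shift of the lower row of `φ_n` into an upward
one. -/
theorem prod_mul_phiS_gzShift_lower_row {ℏ : ℝ} (hℏ : 0 < ℏ) {n j : ℕ} (hj : j ∈ Finset.Icc 1 n)
    (γ : GZ) (h : ∀ m ∈ Finset.Icc 1 (n + 1), γ n j - γ (n + 1) m - Complex.I * ℏ / 2 ≠ 0) :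
    (∏ r ∈ Finset.Icc 1 (n + 1), (γ n j - γ (n + 1) r - Complex.I * ℏ / 2)) *
        phiS ℏ n (gzShift (-(Complex.I * ℏ)) n j γ) =
      Complex.I ^ (n + 1) * phiS ℏ n (gzShift (Complex.I * ℏ) n j γ) := by
  have hℏ' : (ℏ : ℂ) ≠ 0 := by exact_mod_cast hℏ.ne'
  have hI := Complex.I_ne_zero
  have hcard : Complex.I ^ (n + 1) = ∏ _r ∈ Finset.Icc 1 (n + 1), Complex.I := by simp
  unfold phiS
  rw [← Finset.mul_prod_erase _ _ hj, ← Finset.mul_prod_erase _ _ hj, ← mul_assoc, ← mul_assoc,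
    hcard, ← Finset.prod_mul_distrib, ← Finset.prod_mul_distrib]
  congr 1
  · refine Finset.prod_congr rfl fun m hm => ?_
    rw [gzShift_same, gzShift_same, gzShift_of_row_ne _ _ _ _ (Nat.succ_ne_self n),
      gzShift_of_row_ne _ _ _ _ (Nat.succ_ne_self n)]
    have hx := h m hm
    set z : ℂ := (γ n j - γ (n + 1) m - Complex.I * ℏ / 2) / (2 * Complex.I * ℏ) with hz
    have hz0 : z ≠ 0 := div_ne_zero hx (by simp [hℏ'])
    have e1 : (γ n j + -(Complex.I * ℏ) - γ (n + 1) m) / (2 * Complex.I * ℏ) + 1 / 4 = z := by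
      rw [hz]; field_simp; ring
    have e2 : (γ n j + Complex.I * ℏ - γ (n + 1) m) / (2 * Complex.I * ℏ) + 1 / 4 = z + 1 := by
      rw [hz]; field_simp; ring
    have e3 : γ n j - γ (n + 1) m - Complex.I * ℏ / 2 = Complex.I * (2 * ℏ * z) := by
      rw [hz]; field_simp
    rw [e1, e2, e3, mul_assoc Complex.I, mul_cpow_mul_Gamma (by simp [hℏ']) hz0]
  · refine Finset.prod_congr rfl fun k hk => Finset.prod_congr rfl fun m _ => ?_
    simp only [gzShift_of_col_ne _ _ _ γ (Finset.ne_of_mem_erase hk),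
      gzShift_of_row_ne _ _ _ γ (Nat.succ_ne_self n)]

/-- The numerator of `E_{n+1,n}` turns an upward shift of the upper row of `φ_{n-1}` into a
downward one. -/
theorem prod_mul_phiS_gzShift_upper_row {ℏ : ℝ} (hℏ : 0 < ℏ) {n j : ℕ}
    (hj : j ∈ Finset.Icc 1 (n + 1)) (γ : GZ)
    (h : ∀ k ∈ Finset.Icc 1 n, γ n k - γ (n + 1) j - Complex.I * ℏ / 2 ≠ 0) :
    (∏ r ∈ Finset.Icc 1 n, (γ (n + 1) j - γ n r + Complex.I * ℏ / 2)) *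
        phiS ℏ n (gzShift (Complex.I * ℏ) (n + 1) j γ) =
      (-Complex.I) ^ n * phiS ℏ n (gzShift (-(Complex.I * ℏ)) (n + 1) j γ) := by
  have hℏ' : (ℏ : ℂ) ≠ 0 := by exact_mod_cast hℏ.ne'
  have hI := Complex.I_ne_zero
  have hcard : (-Complex.I) ^ n = ∏ _r ∈ Finset.Icc 1 n, (-Complex.I) := by simp
  unfold phiS
  rw [hcard, ← Finset.prod_mul_distrib, ← Finset.prod_mul_distrib]
  refine Finset.prod_congr rfl fun k hk => ?_
  rw [← Finset.mul_prod_erase _ _ hj, ← Finset.mul_prod_erase _ _ hj,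
    ← mul_assoc (_ - _ + _), ← mul_assoc (-Complex.I)]
  congr 1
  · rw [gzShift_same, gzShift_same, gzShift_of_row_ne _ _ _ _ (Nat.succ_ne_self n).symm,
      gzShift_of_row_ne _ _ _ _ (Nat.succ_ne_self n).symm]
    have hx := h k hk
    set z : ℂ := (γ n k - γ (n + 1) j - Complex.I * ℏ / 2) / (2 * Complex.I * ℏ) with hz
    have hz0 : z ≠ 0 := div_ne_zero hx (by simp [hℏ'])
    have e1 : (γ n k - (γ (n + 1) j + Complex.I * ℏ)) / (2 * Complex.I * ℏ) + 1 / 4 = z := by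
      rw [hz]; field_simp; ring
    have e2 : (γ n k - (γ (n + 1) j + -(Complex.I * ℏ))) / (2 * Complex.I * ℏ) + 1 / 4 =
        z + 1 := by
      rw [hz]; field_simp; ring
    have e3 : γ (n + 1) j - γ n k + Complex.I * ℏ / 2 = -Complex.I * (2 * ℏ * z) := by
      rw [hz]; field_simp; ring
    rw [e1, e2, e3, mul_assoc (-Complex.I), mul_cpow_mul_Gamma (by simp [hℏ']) hz0]
  · refine Finset.prod_congr rfl fun m hm => ?_
    simp only [gzShift_of_col_ne _ _ _ γ (Finset.ne_of_mem_erase hm),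
      gzShift_of_row_ne _ _ _ γ (Nat.succ_ne_self n).symm]

theorem sum_gzShift (c : ℂ) {n j N : ℕ} (hn : n ∈ Finset.Icc 1 (N - 1)) (hj : j ∈ Finset.Icc 1 n)
    (γ : GZ) :
    ∑ l ∈ Finset.Icc 1 (N - 1), ((l : ℂ) - 1) * ∑ k ∈ Finset.Icc 1 l, gzShift c n j γ l k =
      (∑ l ∈ Finset.Icc 1 (N - 1), ((l : ℂ) - 1) * ∑ k ∈ Finset.Icc 1 l, γ l k) +
        ((n : ℂ) - 1) * c := by
  rw [← Finset.add_sum_erase _ _ hn,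
    ← Finset.add_sum_erase _ (fun l : ℕ => ((l : ℂ) - 1) * ∑ k ∈ Finset.Icc 1 l, γ l k) hn,
    ← Finset.add_sum_erase _ _ hj, ← Finset.add_sum_erase _ (γ n) hj, gzShift_same]
  have h1 : ∑ k ∈ (Finset.Icc 1 n).erase j, gzShift c n j γ n k =
      ∑ k ∈ (Finset.Icc 1 n).erase j, γ n k :=
    Finset.sum_congr rfl fun k hk => gzShift_of_col_ne c n n γ (Finset.ne_of_mem_erase hk)
  have h2 : ∑ l ∈ (Finset.Icc 1 (N - 1)).erase n,
        ((l : ℂ) - 1) * ∑ k ∈ Finset.Icc 1 l, gzShift c n j γ l k =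
      ∑ l ∈ (Finset.Icc 1 (N - 1)).erase n, ((l : ℂ) - 1) * ∑ k ∈ Finset.Icc 1 l, γ l k :=
    Finset.sum_congr rfl fun l hl => by
      simp only [gzShift_of_row_ne c j _ γ (Finset.ne_of_mem_erase hl)]
  rw [h1, h2]
  ring

theorem prod_phiS_eq_prod_range (ℏ : ℝ) {N : ℕ} (hN : 1 ≤ N) (γ : GZ) :
    ∏ n ∈ Finset.Icc 1 (N - 1), phiS ℏ n γ = ∏ n ∈ Finset.range N, phiS ℏ n γ := by
  refine Finset.prod_subset (fun n hn => ?_) fun n hn hn' => ?_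
  · simp only [Finset.mem_Icc, Finset.mem_range] at *; omega
  · have : n = 0 := by simp only [Finset.mem_Icc, Finset.mem_range] at *; omega
    rw [this, phiS_zero]

/-- The value of `v_N` at a shifted array, split into the factors that see the shift and those that
do not. -/
theorem vSuth_gzShift {ℏ : ℝ} (hℏ : 0 < ℏ) (γ : GZ) {N n j : ℕ} (hn : n + 1 < N)
    (hj : j ∈ Finset.Icc 1 (n + 1)) (e : ℂ) :
    vSuth ℏ N (gzShift (e * (Complex.I * ℏ)) (n + 1) j γ) =
      Complex.exp (-((Real.pi : ℂ) / 2 * Complex.I) * e) ^ n *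
        phiS ℏ (n + 1) (gzShift (e * (Complex.I * ℏ)) (n + 1) j γ) *
        phiS ℏ n (gzShift (e * (Complex.I * ℏ)) (n + 1) j γ) *
      (Complex.exp (-((Real.pi : ℂ) / (2 * (ℏ : ℂ))) *
          ∑ l ∈ Finset.Icc 1 (N - 1), ((l : ℂ) - 1) * ∑ k ∈ Finset.Icc 1 l, γ l k) *
        ∏ l ∈ ((Finset.range N).erase (n + 1)).erase n, phiS ℏ l γ) := by
  have hℏ' : (ℏ : ℂ) ≠ 0 := by exact_mod_cast hℏ.ne'
  have hn1 : n + 1 ∈ Finset.Icc 1 (N - 1) := by simp only [Finset.mem_Icc]; omega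
  have hr1 : n + 1 ∈ Finset.range N := by simpa using hn
  have hr2 : n ∈ (Finset.range N).erase (n + 1) := by
    simp only [Finset.mem_erase, Finset.mem_range]; omega
  have hrest : ∏ l ∈ ((Finset.range N).erase (n + 1)).erase n,
        phiS ℏ l (gzShift (e * (Complex.I * ℏ)) (n + 1) j γ) =
      ∏ l ∈ ((Finset.range N).erase (n + 1)).erase n, phiS ℏ l γ := by
    refine Finset.prod_congr rfl fun l hl => ?_
    simp only [Finset.mem_erase] at hl
    exact phiS_gzShift_of_ne ℏ _ j γ hl.2.1 (by omega)
  unfold vSuth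
  rw [sum_gzShift _ hn1 hj, prod_phiS_eq_prod_range ℏ (by omega),
    ← Finset.mul_prod_erase _ _ hr1, ← Finset.mul_prod_erase _ _ hr2, hrest, mul_add,
    Complex.exp_add, ← Complex.exp_nat_mul]
  have : -((Real.pi : ℂ) / (2 * (ℏ : ℂ))) * ((((n + 1 : ℕ) : ℂ) - 1) * (e * (Complex.I * ℏ))) =
      n * (-((Real.pi : ℂ) / 2 * Complex.I) * e) := by
    push_cast; field_simp; ring
  rw [this]
  ring

/-- The contributions of the two shifts of the entry `(n, j)` cancel each other. -/
theorem vSuth_gzShift_cancel {ℏ : ℝ} (hℏ : 0 < ℏ) (γ : GZ) {N n j : ℕ} (hn : n + 1 < N)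
    (hj : j ∈ Finset.Icc 1 (n + 1))
    (hup : ∀ m ∈ Finset.Icc 1 (n + 2), γ (n + 1) j - γ (n + 2) m - Complex.I * ℏ / 2 ≠ 0)
    (hdown : ∀ k ∈ Finset.Icc 1 n, γ n k - γ (n + 1) j - Complex.I * ℏ / 2 ≠ 0) :
    (∏ r ∈ Finset.Icc 1 (n + 2), (γ (n + 1) j - γ (n + 2) r - Complex.I * ℏ / 2)) *
        vSuth ℏ N (gzShift (-(Complex.I * ℏ)) (n + 1) j γ) +
      (∏ r ∈ Finset.Icc 1 n, (γ (n + 1) j - γ n r + Complex.I * ℏ / 2)) *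
        vSuth ℏ N (gzShift (Complex.I * ℏ) (n + 1) j γ) = 0 := by
  have hP := prod_mul_phiS_gzShift_lower_row hℏ hj γ hup
  have hQ := prod_mul_phiS_gzShift_upper_row hℏ hj γ hdown
  have vm := vSuth_gzShift hℏ γ hn hj (-1)
  have vp := vSuth_gzShift hℏ γ hn hj 1
  have em : Complex.exp (-((Real.pi : ℂ) / 2 * Complex.I) * (-1)) = Complex.I := by
    rw [mul_neg_one, neg_neg, Complex.exp_pi_div_two_mul_I]
  have ep : Complex.exp (-((Real.pi : ℂ) / 2 * Complex.I) * 1) = -Complex.I := by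
    rw [mul_one, ← neg_mul, ← neg_div, Complex.exp_neg_pi_div_two_mul_I]
  rw [neg_one_mul, em] at vm
  rw [one_mul, ep] at vp
  rw [vm, vp]
  set R := Complex.exp _ * ∏ l ∈ ((Finset.range N).erase (n + 1)).erase n, phiS ℏ l γ
  have hI : Complex.I ^ n * Complex.I ^ (n + 1 + 1) + (-Complex.I) ^ n * (-Complex.I) ^ n = 0 := by
    rw [← mul_pow, pow_add, pow_add, mul_assoc (Complex.I ^ n), ← mul_assoc, ← mul_pow]
    simp
  linear_combination
    Complex.I ^ n * phiS ℏ n (gzShift (-(Complex.I * ℏ)) (n + 1) j γ) * R * hP +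
    (-Complex.I) ^ n * phiS ℏ (n + 1) (gzShift (Complex.I * ℏ) (n + 1) j γ) * R * hQ +
    phiS ℏ (n + 1) (gzShift (Complex.I * ℏ) (n + 1) j γ) *
      phiS ℏ n (gzShift (-(Complex.I * ℏ)) (n + 1) j γ) * R * hI

theorem sub_sub_ne_zero_of_div_add_half_ne_one {ℏ : ℝ} (hℏ : 0 < ℏ) {x y : ℂ}
    (h : (x - y) / (Complex.I * ℏ) + 1 / 2 ≠ 1) : x - y - Complex.I * ℏ / 2 ≠ 0 := by
  have hℏ' : (ℏ : ℂ) ≠ 0 := by exact_mod_cast hℏ.ne'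
  intro h0
  apply h
  rw [sub_eq_zero.mp h0]
  field_simp [Complex.I_ne_zero]
  norm_num

theorem sutherland_vector_vN (ℏ : ℝ) (hℏ : 0 < ℏ) (N : ℕ) (hN : 2 ≤ N)
    (γ : GZ) (hγ : NonResonant ℏ N γ)
    (hγ' : ∀ n ∈ Finset.Icc 1 (N - 1), ∀ k ∈ Finset.Icc 1 n, ∀ m ∈ Finset.Icc 1 (n + 1),
      ∀ z : ℤ, (γ n k - γ (n + 1) m) / (Complex.I * ℏ) + 1 / 2 ≠ (z : ℂ)) :
    ∀ n : ℕ, 1 ≤ n → n ≤ N - 1 →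
      Eraise ℏ n (vSuth ℏ N) γ - Elower ℏ n (vSuth ℏ N) γ = 0 ∧
      ∑ j ∈ Finset.Icc 1 n,
        ((∏ r ∈ Finset.Icc 1 (n + 1), (γ n j - γ (n + 1) r - Complex.I * ℏ / 2)) *
            vSuth ℏ N (gzShift (-(Complex.I * ℏ)) n j γ) +
          (∏ r ∈ Finset.Icc 1 (n - 1), (γ n j - γ (n - 1) r + Complex.I * ℏ / 2)) *
            vSuth ℏ N (gzShift (Complex.I * ℏ) n j γ)) /
          ∏ s ∈ (Finset.Icc 1 n).erase j, (γ n j - γ n s) = 0 := by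
  intro n hn1 hnN
  obtain ⟨n, rfl⟩ : ∃ m, n = m + 1 := ⟨n - 1, by omega⟩
  have hne : ∀ l ∈ Finset.Icc 1 (N - 1), ∀ k ∈ Finset.Icc 1 l, ∀ m ∈ Finset.Icc 1 (l + 1),
      γ l k - γ (l + 1) m - Complex.I * ℏ / 2 ≠ 0 := fun l hl k hk m hm =>
    sub_sub_ne_zero_of_div_add_half_ne_one hℏ (by simpa using hγ' l hl k hk m hm 1)
  have hcancel : ∀ j ∈ Finset.Icc 1 (n + 1), _ := fun j hj =>
    vSuth_gzShift_cancel (N := N) hℏ γ (by omega) hj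
      (fun m hm => hne (n + 1) (Finset.mem_Icc.mpr ⟨hn1, hnN⟩) j hj m hm)
      (fun k hk => hne n (Finset.mem_Icc.mpr (by have := Finset.mem_Icc.mp hk; omega)) k hk j hj)
  have hsum : ∑ j ∈ Finset.Icc 1 (n + 1),
        ((∏ r ∈ Finset.Icc 1 (n + 1 + 1),
              (γ (n + 1) j - γ (n + 1 + 1) r - Complex.I * ℏ / 2)) *
            vSuth ℏ N (gzShift (-(Complex.I * ℏ)) (n + 1) j γ) +
          (∏ r ∈ Finset.Icc 1 (n + 1 - 1),
              (γ (n + 1) j - γ (n + 1 - 1) r + Complex.I * ℏ / 2)) *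
            vSuth ℏ N (gzShift (Complex.I * ℏ) (n + 1) j γ)) /
          ∏ s ∈ (Finset.Icc 1 (n + 1)).erase j, (γ (n + 1) j - γ (n + 1) s) = 0 := by
    refine Finset.sum_eq_zero fun j hj => ?_
    rw [Nat.add_sub_cancel, hcancel j hj, zero_div]
  refine ⟨?_, hsum⟩
  simp only [add_div, Finset.sum_add_distrib] at hsum
  simp only [Eraise, Elower, div_mul_eq_mul_div]
  linear_combination -(1 / (Complex.I * ℏ)) * hsum
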